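/- There exists a Borel probability measure W on C (the Wiener measure) such that for every p ≥ 1 and all real numbers 0 < u_1 < u_2 < … < u_p ≤ 1, the pushforward of W under the map x ↦ (x(u_1), …, x(u_p)) is the centered Gaussian measure on ℝ^p with covariance matrix (min(u_j, u_r))_{1≤j,r≤p}, i.e., the measure with density u ↦ ((2π)^p det M)^{−1/2} exp(−⟨u, M^{−1} u⟩/2) with respect to Lebesgue measure, where M_{j,r} = min(u_j, u_r). -/

import Mathlib

open MeasureTheory Matrix Set Filter Topology
open scoped ENNReal

noncomputable section

/-- The space `C` of continuous functions on `[0,1]` vanishing at `0`,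
with the supremum metric (inherited from `C([0,1], ℝ)`). -/
abbrev Cz : Type := {f : C(Set.Icc (0:ℝ) 1, ℝ) // f ⟨0, ⟨le_refl 0, zero_le_one⟩⟩ = 0}

/-- The projection `π_n : C → ℝ^n`, `x ↦ (x(t_1), …, x(t_n))`. -/
def proj (t : ℕ → ℝ) (ht : ∀ k, t k ∈ Set.Ioc (0:ℝ) 1) (n : ℕ) (x : Cz) : Fin n → ℝ :=
  fun i => (x : C(Set.Icc (0:ℝ) 1, ℝ)) ⟨t i, Set.Ioc_subset_Icc_self (ht i)⟩

/-- The covariance matrix `M_n` with entries `min (t j) (t r)`. -/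
def covM (t : ℕ → ℝ) (n : ℕ) : Matrix (Fin n) (Fin n) ℝ :=
  Matrix.of fun j r => min (t (j : ℕ)) (t (r : ℕ))

/-- The centered Gaussian measure on `ℝ^n` with (positive definite) covariance matrix `M`:
the measure with density `u ↦ ((2π)^n det M)^{-1/2} exp (-⟨u, M⁻¹ u⟩ / 2)` w.r.t. Lebesgue
measure. -/
def gauss (n : ℕ) (M : Matrix (Fin n) (Fin n) ℝ) : Measure (Fin n → ℝ) :=
  volume.withDensity fun u =>
    ENNReal.ofReal ((((2 * Real.pi) ^ n * M.det) ^ (-(1:ℝ)/2 : ℝ)) *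
      Real.exp (-(u ⬝ᵥ M⁻¹.mulVec u) / 2))

/-- `φ(K) = inf_{n ≥ 1} ν_n (π_n(K))`. -/
def phi (t : ℕ → ℝ) (ht : ∀ k, t k ∈ Set.Ioc (0:ℝ) 1) (K : Set Cz) : ℝ≥0∞ :=
  ⨅ n : ℕ, gauss (n+1) (covM t (n+1)) (proj t ht (n+1) '' K)

/-- `μ(A) = sup {φ(K) : K ⊆ A, K compact}`. -/
def mu (t : ℕ → ℝ) (ht : ∀ k, t k ∈ Set.Ioc (0:ℝ) 1) (A : Set Cz) : ℝ≥0∞ :=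
  ⨆ (K : Set Cz) (_ : K ⊆ A) (_ : IsCompact K), phi t ht K

instance : MeasurableSpace Cz := borel Cz
instance : BorelSpace Cz := ⟨rfl⟩

/-!
Lévy–Ciesielski construction. Brownian motion is the series `∑ ξ i • schauder i` with independent
standard Gaussian coefficients, and Wiener measure is its law. The `2 ^ m` Schauder functions of
level `m` are tents of height of order `2 ^ (-m / 2)` with disjoint supports, so the fourth moment
of the supremum norm of level `m` is of order `2 ^ m * 2 ^ (-2 * m)`, and the series converges
uniformly almost surely. (Second moments would give `2 ^ m * 2 ^ (-m)`, without decay.)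

The covariance of the series is `s * t` plus a tent series, whose sum is the Brownian bridge kernel
`B s t = min s t - s * t` because of the self-similarity
`B s t = tent s * tent t + (B (2 * s) (2 * t) + B (2 * s - 1) (2 * t - 1)) / 2`.
Finally, `gauss n M` is the image of the standard Gaussian measure under `A` when `M = A * Aᵀ`, so
its characteristic function is known, and it is the limit of those of the partial sums.
-/

open ProbabilityTheory

section GaussianDensity

variable {n : ℕ}

lemma map_withDensity_comp {α β : Type*} [MeasurableSpace α] [MeasurableSpace β] {μ : Measure α}
    {T : α → β} {f : β → ℝ≥0∞} (hT : Measurable T) (hf : Measurable f) :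
    (μ.withDensity fun x => f (T x)).map T = (μ.map T).withDensity f := by
  ext s hs
  rw [Measure.map_apply hT hs, withDensity_apply _ (hT hs), withDensity_apply _ hs,
    setLIntegral_map hs hf hT]

lemma mulVec_dotProduct_inv_mulVec (A M : Matrix (Fin n) (Fin n) ℝ) (hA : A.det ≠ 0)
    (x : Fin n → ℝ) :
    (A *ᵥ x) ⬝ᵥ (A * M * Aᵀ)⁻¹ *ᵥ (A *ᵥ x) = x ⬝ᵥ M⁻¹ *ᵥ x := by
  have hA' : IsUnit A.det := hA.isUnit
  have hinv : A⁻¹ *ᵥ (A *ᵥ x) = x := by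
    rw [mulVec_mulVec, nonsing_inv_mul _ hA', one_mulVec]
  rw [Matrix.mul_inv_rev, Matrix.mul_inv_rev, ← mulVec_mulVec, ← mulVec_mulVec, hinv,
    ← transpose_nonsing_inv, dotProduct_mulVec, vecMul_transpose, hinv]

lemma gauss_density_comp_mulVec (A M : Matrix (Fin n) (Fin n) ℝ) (hA : A.det ≠ 0)
    (hM : 0 ≤ M.det) (x : Fin n → ℝ) :
    ((2 * Real.pi) ^ n * M.det) ^ (-(1 : ℝ) / 2) * Real.exp (-(x ⬝ᵥ M⁻¹ *ᵥ x) / 2) =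
      |A.det| * (((2 * Real.pi) ^ n * (A * M * Aᵀ).det) ^ (-(1 : ℝ) / 2) *
        Real.exp (-((A *ᵥ x) ⬝ᵥ (A * M * Aᵀ)⁻¹ *ᵥ (A *ᵥ x)) / 2)) := by
  have hdet : (2 * Real.pi) ^ n * (A * M * Aᵀ).det = |A.det| ^ 2 * ((2 * Real.pi) ^ n * M.det) := by
    rw [det_mul, det_mul, det_transpose, sq_abs]; ring
  have hpow : (|A.det| ^ 2) ^ (-(1 : ℝ) / 2) = |A.det|⁻¹ := by
    rw [← Real.rpow_natCast_mul (abs_nonneg _)]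
    norm_num [Real.rpow_neg_one]
  rw [mulVec_dotProduct_inv_mulVec A M hA, hdet,
    Real.mul_rpow (x := |A.det| ^ 2) (by positivity) (by positivity), hpow]
  have : |A.det| ≠ 0 := abs_ne_zero.2 hA
  field_simp

theorem map_mulVec_gauss (A M : Matrix (Fin n) (Fin n) ℝ) (hA : A.det ≠ 0) (hM : 0 ≤ M.det) :
    (gauss n M).map (A *ᵥ ·) = gauss n (A * M * Aᵀ) := by
  have hvol : ENNReal.ofReal |A.det| • volume.map (A *ᵥ ·) = (volume : Measure (Fin n → ℝ)) := by
    change ENNReal.ofReal |A.det| • volume.map (toLin' A) = _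
    rw [Real.map_matrix_volume_pi_eq_smul_volume_pi hA, smul_smul,
      ← ENNReal.ofReal_mul (abs_nonneg _), ← abs_mul, mul_inv_cancel₀ hA, abs_one,
      ENNReal.ofReal_one, one_smul]
  have hAm : Measurable (A *ᵥ · : (Fin n → ℝ) → Fin n → ℝ) :=
    Continuous.measurable (by fun_prop)
  rw [gauss, gauss]
  simp_rw [gauss_density_comp_mulVec A M hA hM, ENNReal.ofReal_mul (abs_nonneg A.det)]
  conv_rhs => rw [← hvol, withDensity_smul_measure, ← map_withDensity_comp hAm (by fun_prop)]
  rw [← Measure.map_smul, ← withDensity_smul _ (by fun_prop)]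
  rfl

lemma pi_gaussianReal_eq_withDensity :
    Measure.pi (fun _ : Fin n => gaussianReal 0 1) =
      volume.withDensity fun x => ENNReal.ofReal (∏ i, gaussianPDFReal 0 1 (x i)) := by
  refine Measure.pi_eq fun s hs => ?_
  have hint : ∀ i, Integrable (gaussianPDFReal 0 1) (volume.restrict (s i)) := fun _ =>
    (integrable_gaussianPDFReal 0 1).restrict
  rw [withDensity_apply _ (MeasurableSet.univ_pi hs), volume_pi, Measure.restrict_pi_pi,
    ← ofReal_integral_eq_lintegral_ofReal (Integrable.fintype_prod hint)
      (.of_forall fun x => Finset.prod_nonneg fun i _ => gaussianPDFReal_nonneg _ _ _),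
    integral_fintype_prod_eq_prod (f := fun _ => gaussianPDFReal 0 1),
    ENNReal.ofReal_prod_of_nonneg fun i _ => integral_nonneg (gaussianPDFReal_nonneg _ _)]
  simp only [gaussianReal_apply_eq_integral _ one_ne_zero]

theorem gauss_one : gauss n 1 = Measure.pi fun _ : Fin n => gaussianReal 0 1 := by
  rw [gauss, pi_gaussianReal_eq_withDensity]
  congr with x
  have hconst : ((2 * Real.pi) ^ n) ^ (-(1 : ℝ) / 2) = (√(2 * Real.pi))⁻¹ ^ n := by
    rw [← Real.rpow_pow_comm (by positivity), neg_div, Real.rpow_neg (by positivity),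
      ← Real.sqrt_eq_rpow]
  simp only [gaussianPDFReal, Finset.prod_mul_distrib, ← Real.exp_sum, det_one, inv_one,
    one_mulVec, hconst, dotProduct, mul_one, NNReal.coe_one, sub_zero, Finset.prod_const,
    Finset.card_univ, Fintype.card_fin, ← Finset.sum_div, Finset.sum_neg_distrib, pow_two]

theorem exists_eq_mul_transpose {ι : Type*} [Fintype ι] [DecidableEq ι] {M : Matrix ι ι ℝ}
    (hM : M.PosDef) :
    ∃ A : Matrix ι ι ℝ, A.det ≠ 0 ∧ M = A * Aᵀ := by
  open scoped MatrixOrder Matrix.Norms.L2Operator in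
  obtain ⟨A, hA, rfl⟩ := CStarAlgebra.isStrictlyPositive_iff_eq_mul_star_self.1
    hM.isStrictlyPositive
  refine ⟨A, ((isUnit_iff_isUnit_det A).1 hA).ne_zero, ?_⟩
  rw [star_eq_conjTranspose, conjTranspose_eq_transpose_of_trivial]

end GaussianDensity

section MinMatrix

/-- The lower triangular matrix of ones, which maps a vector to its partial sums. -/
def lowerOnes (ι : Type*) [LE ι] [DecidableLE ι] : Matrix ι ι ℝ :=
  of fun j i => if i ≤ j then 1 else 0

variable {ι : Type*} [Fintype ι] [LinearOrder ι]

lemma det_lowerOnes : (lowerOnes ι).det = 1 := by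
  have htri : (lowerOnes ι).BlockTriangular OrderDual.toDual := fun i j hij => by
    simpa [lowerOnes] using hij
  rw [det_of_isLowerTriangular _ htri]
  simp [lowerOnes]

lemma lowerOnes_mul_diagonal_mul_transpose [LocallyFiniteOrderBot ι] (d : ι → ℝ) :
    lowerOnes ι * diagonal d * (lowerOnes ι)ᵀ =
      of fun j r => ∑ i ∈ Finset.Iic (min j r), d i := by
  ext j r
  rw [mul_apply, of_apply, ← Finset.sum_subset (Finset.subset_univ (Finset.Iic (min j r)))]
  · refine Finset.sum_congr rfl fun i hi => ?_
    simp_all [lowerOnes, mul_diagonal]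
  · intro i _ hi
    rw [Finset.mem_Iic, le_min_iff] at hi
    simp [lowerOnes, mul_diagonal, ← ite_and, and_comm, hi]

theorem posDef_min {p : ℕ} {u : Fin p → ℝ} (hu : StrictMono u) (hpos : ∀ j, 0 < u j) :
    (of fun j r => min (u j) (u r)).PosDef := by
  let v : Fin (p + 1) → ℝ := Fin.cons 0 u
  let d : Fin p → ℝ := fun i => v i.succ - v i.castSucc
  have hd : ∀ i, 0 < d i := fun i => sub_pos.2 <|
    Fin.strictMono_iff_lt_succ.1 (Fin.strictMono_cons.2 ⟨hpos, hu⟩) i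
  have hfactor : (of fun j r => min (u j) (u r)) =
      lowerOnes (Fin p) * diagonal d * (lowerOnes (Fin p))ᴴ := by
    ext j r
    rw [conjTranspose_eq_transpose_of_trivial, lowerOnes_mul_diagonal_mul_transpose, of_apply,
      of_apply, Fin.sum_Iic_sub _ v, ← hu.monotone.map_min]
    simp [v]
  have hunit : IsUnit (lowerOnes (Fin p)) := by
    simp [isUnit_iff_isUnit_det, det_lowerOnes]
  rw [hfactor]
  exact (PosDef.diagonal hd).mul_mul_conjTranspose_same (vecMul_injective_of_isUnit hunit)

end MinMatrix

section GaussianSeries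

variable {Ω ι E : Type*} [MeasurableSpace Ω] {P : Measure Ω} {ξ : ι → Ω → ℝ}
  [NormedAddCommGroup E] [NormedSpace ℝ E] [MeasurableSpace E] [BorelSpace E]

lemma charFunDual_map_smul_of_hasLaw_gaussianReal {X : Ω → ℝ} (hX : HasLaw X (gaussianReal 0 1) P)
    (v : E) (L : StrongDual ℝ E) :
    charFunDual (P.map fun ω => X ω • v) L = Complex.exp (-(L v ^ 2 : ℝ) / 2) := by
  have hmap : P.map (fun ω => X ω • v) = (gaussianReal 0 1).map (fun x : ℝ => x • v) := by
    rw [← hX.map_eq, AEMeasurable.map_map_of_aemeasurable (by fun_prop) hX.aemeasurable]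
    rfl
  have hL : (fun x : ℝ => L (x • v)) = (· * L v) := by ext; simp
  rw [hmap, charFunDual_eq_charFun_map_one, Measure.map_map (by fun_prop) (by fun_prop),
    Function.comp_def, hL, gaussianReal_map_mul_const, charFun_gaussianReal]
  simp [neg_div]

theorem charFunDual_map_sum_smul [SecondCountableTopology E] [IsProbabilityMeasure P]
    (hlaw : ∀ i, HasLaw (ξ i) (gaussianReal 0 1) P) (hindep : iIndepFun ξ P)
    (s : Finset ι) (v : ι → E) (L : StrongDual ℝ E) :
    charFunDual (P.map fun ω => ∑ i ∈ s, ξ i ω • v i) L =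
      Complex.exp (-(∑ i ∈ s, L (v i) ^ 2 : ℝ) / 2) := by
  have hindep_smul : iIndepFun (fun i ω => ξ i ω • v i) P :=
    hindep.comp (fun i x => x • v i) fun i => by fun_prop
  rw [iIndepFun.charFunDual_map_fun_finsetSum_eq_prod
    (fun i _ => (hlaw i).aemeasurable.smul_const (v i)) (hindep_smul.restrict s), Finset.prod_apply]
  simp only [charFunDual_map_smul_of_hasLaw_gaussianReal (hlaw _), ← Complex.exp_sum]
  rw [Complex.ofReal_sum, ← Finset.sum_neg_distrib, Finset.sum_div]

lemma tendsto_charFunDual_map [IsFiniteMeasure P] {X : ℕ → Ω → E} {Y : Ω → E}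
    (hX : ∀ N, AEMeasurable (X N) P)
    (hlim : ∀ᵐ ω ∂P, Tendsto (fun N => X N ω) atTop (𝓝 (Y ω))) (L : StrongDual ℝ E) :
    Tendsto (fun N => charFunDual (P.map (X N)) L) atTop (𝓝 (charFunDual (P.map Y) L)) := by
  have hcont : Continuous fun x => Complex.exp (L x * Complex.I) := by fun_prop
  have hmap : ∀ Z : Ω → E, AEMeasurable Z P →
      charFunDual (P.map Z) L = ∫ ω, Complex.exp (L (Z ω) * Complex.I) ∂P := fun Z hZ =>
    integral_map hZ (by fun_prop)
  simp only [hmap _ (aemeasurable_of_tendsto_metrizable_ae atTop hX hlim), hmap _ (hX _)]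
  refine tendsto_integral_of_dominated_convergence (fun _ => 1) (fun N => ?_)
    (integrable_const _) (fun N => .of_forall fun ω => ?_) ?_
  · exact (hcont.measurable.comp_aemeasurable (hX N)).aestronglyMeasurable
  · exact (Complex.norm_exp_ofReal_mul_I _).le
  · filter_upwards [hlim] with ω hω using (hcont.tendsto _).comp hω

end GaussianSeries

section GaussianCharFun

variable {n : ℕ} {M : Matrix (Fin n) (Fin n) ℝ}

/-- The vector representing a linear functional on `ℝⁿ` through the dot product. -/
def dualVec (L : StrongDual ℝ (Fin n → ℝ)) : Fin n → ℝ := fun j => L (Pi.single j 1)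

lemma dualVec_dotProduct (L : StrongDual ℝ (Fin n → ℝ)) (x : Fin n → ℝ) :
    dualVec L ⬝ᵥ x = L x := by
  conv_rhs => rw [pi_eq_sum_univ' x]
  simp [dualVec, dotProduct, mul_comm]

lemma sum_sq_apply_eq_dotProduct_mulVec {ι : Type*} (s : Finset ι) (v : ι → Fin n → ℝ)
    (L : StrongDual ℝ (Fin n → ℝ)) :
    ∑ i ∈ s, L (v i) ^ 2 = dualVec L ⬝ᵥ (∑ i ∈ s, vecMulVec (v i) (v i)) *ᵥ dualVec L := by
  rw [sum_mulVec, dotProduct_sum]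
  refine Finset.sum_congr rfl fun i _ => ?_
  rw [vecMulVec_mulVec, ← dualVec_dotProduct, dotProduct_smul, dotProduct_comm (v i), sq]
  rfl

lemma mul_transpose_eq_sum_vecMulVec (A : Matrix (Fin n) (Fin n) ℝ) :
    A * Aᵀ = ∑ i, vecMulVec (A.col i) (A.col i) := by
  ext j r
  simp [mul_apply, Matrix.sum_apply, vecMulVec_apply]

lemma gauss_mul_transpose {A : Matrix (Fin n) (Fin n) ℝ} (hA : A.det ≠ 0) :
    gauss n (A * Aᵀ) = (Measure.pi fun _ : Fin n => gaussianReal 0 1).map (A *ᵥ ·) := by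
  rw [← gauss_one, map_mulVec_gauss A 1 hA (by simp), mul_one]

lemma isProbabilityMeasure_gauss (hM : M.PosDef) : IsProbabilityMeasure (gauss n M) := by
  obtain ⟨A, hA, rfl⟩ := exists_eq_mul_transpose hM
  rw [gauss_mul_transpose hA]
  exact Measure.isProbabilityMeasure_map (by fun_prop)

theorem charFunDual_gauss (hM : M.PosDef) (L : StrongDual ℝ (Fin n → ℝ)) :
    charFunDual (gauss n M) L =
      Complex.exp (-(dualVec L ⬝ᵥ M *ᵥ dualVec L : ℝ) / 2) := by
  obtain ⟨A, hA, rfl⟩ := exists_eq_mul_transpose hM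
  have hsum : (A *ᵥ · : (Fin n → ℝ) → Fin n → ℝ) = fun x => ∑ i, x i • A.col i := by
    ext x j
    simp [mulVec_eq_sum]
  rw [gauss_mul_transpose hA, hsum, mul_transpose_eq_sum_vecMulVec,
    charFunDual_map_sum_smul
      (fun i => (measurePreserving_eval (fun _ => gaussianReal 0 1) i).hasLaw)
      (iIndepFun_pi (X := fun _ x => x) fun _ => aemeasurable_id),
    sum_sq_apply_eq_dotProduct_mulVec]

variable {Ω ι : Type*} [MeasurableSpace Ω] {P : Measure Ω} [IsProbabilityMeasure P]
  {ξ : ι → Ω → ℝ}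

theorem map_eq_gauss_of_tendsto (hlaw : ∀ i, HasLaw (ξ i) (gaussianReal 0 1) P)
    (hindep : iIndepFun ξ P) (hM : M.PosDef) {I : ℕ → Finset ι} {v : ι → Fin n → ℝ}
    {Y : Ω → Fin n → ℝ}
    (hY : ∀ᵐ ω ∂P, Tendsto (fun N => ∑ i ∈ I N, ξ i ω • v i) atTop (𝓝 (Y ω)))
    (hcov : Tendsto (fun N => ∑ i ∈ I N, vecMulVec (v i) (v i)) atTop (𝓝 M)) :
    P.map Y = gauss n M := by
  have hpartial : ∀ N, AEMeasurable (fun ω => ∑ i ∈ I N, ξ i ω • v i) P := fun N =>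
    Finset.aemeasurable_fun_sum _ fun i _ => (hlaw i).aemeasurable.smul_const (v i)
  have := Measure.isProbabilityMeasure_map
    (aemeasurable_of_tendsto_metrizable_ae atTop hpartial hY)
  have := isProbabilityMeasure_gauss hM
  refine Measure.ext_of_charFunDual (funext fun L => ?_)
  have hcont : Continuous fun C : Matrix (Fin n) (Fin n) ℝ =>
      Complex.exp (-(dualVec L ⬝ᵥ C *ᵥ dualVec L : ℝ) / 2) := by fun_prop
  refine tendsto_nhds_unique (tendsto_charFunDual_map hpartial hY L) ?_
  simp only [charFunDual_map_sum_smul hlaw hindep, sum_sq_apply_eq_dotProduct_mulVec,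
    charFunDual_gauss hM]
  exact (hcont.tendsto M).comp hcov

end GaussianCharFun

section Schauder

/-- The projection of `ℝ` onto `[0, 1]`. -/
def clamp (x : ℝ) : ℝ := max 0 (min x 1)

/-- The tent function on `[0, 1]` with peak `tent (1 / 2) = 1 / 2`. -/
def tent (x : ℝ) : ℝ := max 0 (min x (1 - x))

/-- The covariance kernel `min s t - s t` of the Brownian bridge on `[0, 1]`, extended to `ℝ` by
clamping both arguments. -/
def bridgeKernel (s t : ℝ) : ℝ := min (clamp s) (clamp t) - clamp s * clamp t

lemma monotone_clamp : Monotone clamp := fun _ _ h => by unfold clamp; gcongr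

lemma clamp_mem_Icc (x : ℝ) : clamp x ∈ Icc (0 : ℝ) 1 := by
  grind [clamp]

lemma clamp_of_mem_Icc {x : ℝ} (hx : x ∈ Icc (0 : ℝ) 1) : clamp x = x := by
  grind [clamp]

lemma clamp_eq_half_add (x : ℝ) : clamp x = (clamp (2 * x) + clamp (2 * x - 1)) / 2 := by
  grind [clamp]

lemma tent_eq_half_sub (x : ℝ) : tent x = (clamp (2 * x) - clamp (2 * x - 1)) / 2 := by
  grind [clamp, tent]

lemma tent_eq_min_clamp (x : ℝ) : tent x = min (clamp x) (1 - clamp x) := by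
  grind [clamp, tent]

lemma tent_nonneg (x : ℝ) : 0 ≤ tent x := le_max_left _ _

lemma continuous_tent : Continuous tent := by unfold tent; fun_prop

lemma sum_range_tent_sub_le_one (n : ℕ) (x : ℝ) : ∑ k ∈ Finset.range n, tent (x - k) ≤ 1 := by
  have hterm : ∀ k : ℕ, tent (x - k) ≤ clamp (2 * (x - k)) - clamp (2 * (x - (k + 1 : ℕ))) := by
    intro k
    have hmono : clamp (2 * (x - (k + 1 : ℕ))) ≤ clamp (2 * (x - k) - 1) :=
      monotone_clamp (by push_cast; linarith)
    linarith [tent_eq_half_sub (x - k), tent_nonneg (x - k)]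
  calc ∑ k ∈ Finset.range n, tent (x - k)
      ≤ ∑ k ∈ Finset.range n, (clamp (2 * (x - k)) - clamp (2 * (x - (k + 1 : ℕ)))) :=
        Finset.sum_le_sum fun k _ => hterm k
    _ = clamp (2 * (x - (0 : ℕ))) - clamp (2 * (x - n)) :=
        Finset.sum_range_sub' (fun k : ℕ => clamp (2 * (x - k))) n
    _ ≤ 1 := by linarith [(clamp_mem_Icc (2 * (x - (0 : ℕ)))).2, (clamp_mem_Icc (2 * (x - n))).1]

lemma bridgeKernel_nonneg (s t : ℝ) : 0 ≤ bridgeKernel s t := by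
  have hs := clamp_mem_Icc s
  have ht := clamp_mem_Icc t
  exact sub_nonneg.2 (le_min (mul_le_of_le_one_right hs.1 ht.2) (mul_le_of_le_one_left ht.1 hs.2))

lemma bridgeKernel_le_tent (s t : ℝ) : bridgeKernel s t ≤ tent s := by
  have hs := clamp_mem_Icc s
  have ht := clamp_mem_Icc t
  rw [bridgeKernel, tent_eq_min_clamp]
  refine le_min ?_ ?_
  · linarith [min_le_left (clamp s) (clamp t), mul_nonneg hs.1 ht.1]
  · nlinarith [min_le_right (clamp s) (clamp t), mul_nonneg (sub_nonneg.2 hs.2) (sub_nonneg.2 ht.2)]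

lemma bridgeKernel_add_mul {s t : ℝ} (hs : s ∈ Icc (0 : ℝ) 1) (ht : t ∈ Icc (0 : ℝ) 1) :
    bridgeKernel s t + s * t = min s t := by
  rw [bridgeKernel, clamp_of_mem_Icc hs, clamp_of_mem_Icc ht, sub_add_cancel]

lemma min_clamp_eq_half_add (s t : ℝ) : min (clamp s) (clamp t) =
    (min (clamp (2 * s)) (clamp (2 * t)) + min (clamp (2 * s - 1)) (clamp (2 * t - 1))) / 2 := by
  simp only [← monotone_clamp.map_min]
  rw [clamp_eq_half_add, min_sub_sub_right, mul_min_of_nonneg _ _ zero_le_two]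

lemma bridgeKernel_eq_tent_mul_tent_add (s t : ℝ) :
    bridgeKernel s t = tent s * tent t +
      (bridgeKernel (2 * s) (2 * t) + bridgeKernel (2 * s - 1) (2 * t - 1)) / 2 := by
  rw [bridgeKernel, min_clamp_eq_half_add, clamp_eq_half_add s, clamp_eq_half_add t,
    tent_eq_half_sub, tent_eq_half_sub, bridgeKernel, bridgeKernel]
  ring

lemma sum_range_two_mul {M : Type*} [AddCommMonoid M] (f : ℕ → M) (n : ℕ) :
    ∑ k ∈ Finset.range (2 * n), f k = ∑ k ∈ Finset.range n, (f (2 * k) + f (2 * k + 1)) := by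
  induction n with
  | zero => simp
  | succ n ih =>
    rw [Finset.sum_range_succ, ← ih, mul_add_one, Finset.sum_range_succ, Finset.sum_range_succ,
      add_assoc]

lemma sum_bridgeKernel_dyadic_eq (N : ℕ) (s t : ℝ) :
    ∑ k ∈ Finset.range (2 ^ N), bridgeKernel (2 ^ N * s - k) (2 ^ N * t - k) =
      ∑ k ∈ Finset.range (2 ^ N), tent (2 ^ N * s - k) * tent (2 ^ N * t - k) +
      (∑ k ∈ Finset.range (2 ^ (N + 1)),
        bridgeKernel (2 ^ (N + 1) * s - k) (2 ^ (N + 1) * t - k)) / 2 := by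
  rw [pow_succ' 2 N, sum_range_two_mul, Finset.sum_div, ← Finset.sum_add_distrib]
  refine Finset.sum_congr rfl fun k _ => ?_
  rw [bridgeKernel_eq_tent_mul_tent_add]
  push_cast
  ring_nf

lemma bridgeKernel_eq_sum_add (N : ℕ) (s t : ℝ) :
    bridgeKernel s t =
      ∑ m ∈ Finset.range N, ∑ k ∈ Finset.range (2 ^ m),
        (1 / 2) ^ m * (tent (2 ^ m * s - k) * tent (2 ^ m * t - k)) +
      (1 / 2) ^ N * ∑ k ∈ Finset.range (2 ^ N), bridgeKernel (2 ^ N * s - k) (2 ^ N * t - k) := by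
  induction N with
  | zero => simp
  | succ N ih =>
    rw [ih, sum_bridgeKernel_dyadic_eq, Finset.sum_range_succ, ← Finset.mul_sum]
    ring

theorem tendsto_sum_tent_mul_tent (s t : ℝ) :
    Tendsto (fun N => ∑ m ∈ Finset.range N, ∑ k ∈ Finset.range (2 ^ m),
      (1 / 2) ^ m * (tent (2 ^ m * s - k) * tent (2 ^ m * t - k)))
      atTop (𝓝 (bridgeKernel s t)) := by
  have hremainder : Tendsto (fun N : ℕ => (1 / 2) ^ N *
      ∑ k ∈ Finset.range (2 ^ N), bridgeKernel (2 ^ N * s - k) (2 ^ N * t - k)) atTop (𝓝 0) := by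
    refine squeeze_zero (fun N => ?_) (fun N => ?_)
      (tendsto_pow_atTop_nhds_zero_of_lt_one (r := 1 / 2) (by norm_num) (by norm_num))
    · exact mul_nonneg (by positivity) (Finset.sum_nonneg fun k _ => bridgeKernel_nonneg _ _)
    · exact mul_le_of_le_one_right (by positivity) <|
        (Finset.sum_le_sum fun k _ => bridgeKernel_le_tent _ _).trans
          (sum_range_tent_sub_le_one _ _)
  have hlim := hremainder.const_sub (bridgeKernel s t)
  rw [sub_zero] at hlim
  exact hlim.congr fun N => sub_eq_of_eq_add (bridgeKernel_eq_sum_add N s t)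

end Schauder

section UniformNormMoment

variable {Ω ι T : Type*} [TopologicalSpace T] [CompactSpace T] {s : Finset ι} {g : ι → C(T, ℝ)}
  {c : ℝ}

lemma norm_sum_smul_le_mul (hg : ∀ t, ∑ i ∈ s, |g i t| ≤ c) (hc : 0 ≤ c) {x : ι → ℝ} {R : ℝ}
    (hR : 0 ≤ R) (hx : ∀ i ∈ s, |x i| ≤ R) : ‖∑ i ∈ s, x i • g i‖ ≤ R * c := by
  refine (ContinuousMap.norm_le _ (mul_nonneg hR hc)).2 fun t => ?_
  calc ‖(∑ i ∈ s, x i • g i) t‖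
      ≤ ∑ i ∈ s, |x i| * |g i t| := by
        simpa [ContinuousMap.sum_apply, abs_mul] using
          Finset.abs_sum_le_sum_abs (fun i => x i * g i t) s
    _ ≤ ∑ i ∈ s, R * |g i t| :=
        Finset.sum_le_sum fun i hi => mul_le_mul_of_nonneg_right (hx i hi) (abs_nonneg _)
    _ ≤ R * c := by
        rw [← Finset.mul_sum]
        exact mul_le_mul_of_nonneg_left (hg t) hR

lemma norm_sum_smul_pow_le (hg : ∀ t, ∑ i ∈ s, |g i t| ≤ c) (hc : 0 ≤ c) (x : ι → ℝ) {p : ℕ}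
    (hp : p ≠ 0) : ‖∑ i ∈ s, x i • g i‖ ^ p ≤ c ^ p * ∑ i ∈ s, |x i| ^ p := by
  have hsum : 0 ≤ ∑ i ∈ s, |x i| ^ p := Finset.sum_nonneg fun i _ => by positivity
  have hx : ∀ i ∈ s, |x i| ≤ (∑ i ∈ s, |x i| ^ p) ^ (p : ℝ)⁻¹ := fun i hi => by
    refine (Real.le_rpow_inv_iff_of_pos (abs_nonneg _) hsum (by positivity)).2 ?_
    rw [Real.rpow_natCast]
    exact Finset.single_le_sum (f := fun i => |x i| ^ p) (fun _ _ => by positivity) hi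
  calc ‖∑ i ∈ s, x i • g i‖ ^ p
      ≤ ((∑ i ∈ s, |x i| ^ p) ^ (p : ℝ)⁻¹ * c) ^ p := by
        gcongr
        exact norm_sum_smul_le_mul hg hc (by positivity) hx
    _ = c ^ p * ∑ i ∈ s, |x i| ^ p := by
        rw [mul_pow, Real.rpow_inv_natCast_pow hsum hp, mul_comm]

variable [MeasurableSpace Ω] {P : Measure Ω} {ξ : ι → Ω → ℝ} {ν : Measure ℝ}

lemma lintegral_enorm_sum_smul_pow_le (hg : ∀ t, ∑ i ∈ s, |g i t| ≤ c) (hc : 0 ≤ c)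
    (hlaw : ∀ i, HasLaw (ξ i) ν P) {p : ℕ} (hp : p ≠ 0) :
    ∫⁻ ω, ‖∑ i ∈ s, ξ i ω • g i‖ₑ ^ p ∂P ≤
      ENNReal.ofReal c ^ p * (s.card * ∫⁻ x, ‖x‖ₑ ^ p ∂ν) := by
  have hpointwise : ∀ ω, ‖∑ i ∈ s, ξ i ω • g i‖ₑ ^ p ≤
      ENNReal.ofReal c ^ p * ∑ i ∈ s, ‖ξ i ω‖ₑ ^ p := fun ω => by
    simp only [← ofReal_norm, ← ENNReal.ofReal_pow (norm_nonneg _), ← ENNReal.ofReal_pow hc]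
    rw [← ENNReal.ofReal_sum_of_nonneg fun _ _ => by positivity,
      ← ENNReal.ofReal_mul (by positivity)]
    exact ENNReal.ofReal_le_ofReal (norm_sum_smul_pow_le hg hc _ hp)
  have hmeas : ∀ i ∈ s, AEMeasurable (fun ω => ‖ξ i ω‖ₑ ^ p) P := fun i _ =>
    (hlaw i).aemeasurable.enorm.pow_const p
  calc ∫⁻ ω, ‖∑ i ∈ s, ξ i ω • g i‖ₑ ^ p ∂P
      ≤ ∫⁻ ω, ENNReal.ofReal c ^ p * ∑ i ∈ s, ‖ξ i ω‖ₑ ^ p ∂P := lintegral_mono hpointwise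
    _ = ENNReal.ofReal c ^ p * ∑ i ∈ s, ∫⁻ ω, ‖ξ i ω‖ₑ ^ p ∂P := by
        rw [lintegral_const_mul'' _ (Finset.aemeasurable_fun_sum _ hmeas),
          lintegral_finsetSum' _ hmeas]
    _ = ENNReal.ofReal c ^ p * (s.card * ∫⁻ x, ‖x‖ₑ ^ p ∂ν) := by
        simp only [(hlaw _).lintegral_comp (f := fun x => ‖x‖ₑ ^ p) (by fun_prop),
          Finset.sum_const, nsmul_eq_mul]

end UniformNormMoment

lemma ae_summable_norm_of_lintegral_pow_le {Ω E : Type*} [MeasurableSpace Ω] {P : Measure Ω}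
    [NormedAddCommGroup E] {X : ℕ → Ω → E} (hX : ∀ m, AEStronglyMeasurable (X m) P) {p : ℕ}
    (hp : p ≠ 0) {K r : ℝ≥0∞} (hK : K ≠ ∞) (hr : r < 1)
    (hle : ∀ m, ∫⁻ ω, ‖X m ω‖ₑ ^ p ∂P ≤ r ^ m * K) :
    ∀ᵐ ω ∂P, Summable fun m => ‖X m ω‖ := by
  have hp' : (0 : ℝ) < (p : ℝ)⁻¹ := by positivity
  have hnorm : ∀ m, eLpNorm (X m) p P ≤ (r ^ (p : ℝ)⁻¹) ^ m * K ^ (p : ℝ)⁻¹ := fun m => by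
    rw [eLpNorm_eq_lintegral_rpow_enorm_toReal (by exact_mod_cast hp) (by simp), one_div,
      ENNReal.toReal_natCast, ← ENNReal.rpow_natCast, ← ENNReal.rpow_mul, mul_comm _ (m : ℝ),
      ENNReal.rpow_mul, ENNReal.rpow_natCast, ← ENNReal.mul_rpow_of_nonneg _ _ hp'.le]
    simpa only [ENNReal.rpow_natCast] using ENNReal.rpow_le_rpow (hle m) hp'.le
  refine summable_norm_of_tsum_eLpNorm_ne_top (p := p)
    (by exact_mod_cast Nat.one_le_iff_ne_zero.2 hp) hX
    (ne_top_of_le_ne_top ?_ (ENNReal.tsum_le_tsum hnorm))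
  rw [ENNReal.tsum_mul_right, ENNReal.tsum_geometric]
  exact ENNReal.mul_ne_top
    (ENNReal.inv_ne_top.2 (tsub_pos_of_lt (ENNReal.rpow_lt_one hr hp')).ne')
    (ENNReal.rpow_ne_top_of_nonneg hp'.le hK)

section LevyCiesielski

/-- Indices of the Schauder basis of `{f ∈ C([0, 1]) | f 0 = 0}`: `none` stands for the identity
function and `some ⟨m, k⟩` for the tent on the dyadic interval `[k / 2 ^ m, (k + 1) / 2 ^ m]`. -/
abbrev SchauderIndex : Type := Option (Σ m : ℕ, Fin (2 ^ m))

/-- The Schauder functions, i.e. the primitives of the Haar functions. -/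
def schauder : SchauderIndex → C(Icc (0 : ℝ) 1, ℝ)
  | none => ⟨fun t => t, by fun_prop⟩
  | some ⟨m, k⟩ => ⟨fun t => √(1 / 2) ^ m * tent (2 ^ m * t - k),
      continuous_const.mul (continuous_tent.comp (by fun_prop))⟩

/-- The indices of the Schauder functions of dyadic level less than `N`. -/
def schauderIndicesBelow (N : ℕ) : Finset SchauderIndex :=
  Finset.insertNone ((Finset.range N).sigma fun _ => Finset.univ)

lemma sum_schauderIndicesBelow {M : Type*} [AddCommMonoid M] (f : SchauderIndex → M) (N : ℕ) :
    ∑ i ∈ schauderIndicesBelow N, f i =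
      f none + ∑ m ∈ Finset.range N, ∑ k : Fin (2 ^ m), f (some ⟨m, k⟩) := by
  rw [schauderIndicesBelow, Finset.sum_insertNone, Finset.sum_sigma]

lemma schauder_apply_zero (i : SchauderIndex) : schauder i ⟨0, ⟨le_refl 0, zero_le_one⟩⟩ = 0 := by
  rcases i with _ | ⟨m, k⟩
  · rfl
  · simp [schauder, tent]

lemma sum_abs_schauder_le (m : ℕ) (t : Icc (0 : ℝ) 1) :
    ∑ k : Fin (2 ^ m), |schauder (some ⟨m, k⟩) t| ≤ √(1 / 2) ^ m := by
  have habs : ∀ k : Fin (2 ^ m),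
      |schauder (some ⟨m, k⟩) t| = √(1 / 2) ^ m * tent (2 ^ m * t - k) := fun k =>
    abs_of_nonneg (mul_nonneg (by positivity) (tent_nonneg _))
  simp only [habs]
  rw [← Finset.mul_sum, Fin.sum_univ_eq_sum_range fun k => tent (2 ^ m * t - k)]
  exact mul_le_of_le_one_right (by positivity) (sum_range_tent_sub_le_one _ _)

theorem tendsto_sum_schauder_mul_schauder (s t : Icc (0 : ℝ) 1) :
    Tendsto (fun N => ∑ i ∈ schauderIndicesBelow N, schauder i s * schauder i t) atTop
      (𝓝 (min (s : ℝ) t)) := by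
  have hprod : ∀ (m : ℕ) (k : Fin (2 ^ m)),
      schauder (some ⟨m, k⟩) s * schauder (some ⟨m, k⟩) t =
        (1 / 2) ^ m * (tent (2 ^ m * s - k) * tent (2 ^ m * t - k)) := fun m k => by
    have hsq : √(1 / 2 : ℝ) ^ m * √(1 / 2) ^ m = (1 / 2) ^ m := by
      rw [← mul_pow, Real.mul_self_sqrt (by norm_num)]
    simp only [schauder, ContinuousMap.coe_mk]
    rw [mul_mul_mul_comm, hsq]
  rw [← bridgeKernel_add_mul s.2 t.2, add_comm]
  refine ((tendsto_sum_tent_mul_tent s t).const_add (s * t : ℝ)).congr fun N => ?_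
  simp only [sum_schauderIndicesBelow, hprod, Finset.sum_range]
  rfl

/-- The partial sums of the Lévy–Ciesielski series with coefficients `x`. -/
def levyCiesielskiSum (N : ℕ) (x : SchauderIndex → ℝ) : Cz :=
  ⟨∑ i ∈ schauderIndicesBelow N, x i • schauder i, by
    simp [ContinuousMap.sum_apply, schauder_apply_zero]⟩

lemma continuous_levyCiesielskiSum (N : ℕ) : Continuous (levyCiesielskiSum N) :=
  Continuous.subtype_mk (by fun_prop) _

lemma exists_tendsto_levyCiesielskiSum {x : SchauderIndex → ℝ}
    (hx : Summable fun m => ‖∑ k : Fin (2 ^ m), x (some ⟨m, k⟩) • schauder (some ⟨m, k⟩)‖) :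
    ∃ f, Tendsto (fun N => levyCiesielskiSum N x) atTop (𝓝 f) := by
  have hclosed : IsClosed {f : C(Icc (0 : ℝ) 1, ℝ) | f ⟨0, ⟨le_refl 0, zero_le_one⟩⟩ = 0} :=
    isClosed_eq (continuous_eval_const _) continuous_const
  have hlim := hx.of_norm.hasSum.tendsto_sum_nat.const_add (x none • schauder none)
  simp only [← sum_schauderIndicesBelow fun i => x i • schauder i] at hlim
  have hmem := hclosed.mem_of_tendsto hlim (.of_forall fun N => (levyCiesielskiSum N x).2)
  exact ⟨⟨_, hmem⟩, tendsto_subtype_rng.2 hlim⟩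

variable {Ω : Type*} [MeasurableSpace Ω] {P : Measure Ω} {ξ : SchauderIndex → Ω → ℝ}

lemma ae_summable_norm_sum_schauder (hlaw : ∀ i, HasLaw (ξ i) (gaussianReal 0 1) P) :
    ∀ᵐ ω ∂P, Summable fun m =>
      ‖∑ k : Fin (2 ^ m), ξ (some ⟨m, k⟩) ω • schauder (some ⟨m, k⟩)‖ := by
  have hK : ∫⁻ x, ‖x‖ₑ ^ 4 ∂(gaussianReal 0 1) ≠ ∞ := by
    have hmem : MemLp id ((4 : ℕ) : ℝ≥0∞) (gaussianReal 0 1) := memLp_id_gaussianReal' _ (by simp)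
    simpa using (lintegral_rpow_enorm_lt_top_of_eLpNorm_lt_top (by simp) (by simp) hmem.2).ne
  refine ae_summable_norm_of_lintegral_pow_le (fun m => ?_) four_ne_zero hK
    (r := ENNReal.ofReal (1 / 2)) (by norm_num) fun m => ?_
  · exact Finset.aestronglyMeasurable_fun_sum _ fun k _ =>
      (hlaw _).aemeasurable.aestronglyMeasurable.smul_const _
  · have hlevel := lintegral_enorm_sum_smul_pow_le (s := Finset.univ) (sum_abs_schauder_le m)
      (by positivity) (fun k => hlaw (some ⟨m, k⟩)) four_ne_zero
    have hrate : ENNReal.ofReal (√(1 / 2) ^ m) ^ 4 * (2 ^ m : ℕ) = ENNReal.ofReal (1 / 2) ^ m := by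
      have hsqrt : √(1 / 2 : ℝ) ^ 4 = 1 / 4 := by
        rw [show 4 = 2 * 2 from rfl, pow_mul, Real.sq_sqrt (by norm_num)]
        norm_num
      rw [← ENNReal.ofReal_natCast, ← ENNReal.ofReal_pow (by positivity),
        ← ENNReal.ofReal_pow (by positivity), ← ENNReal.ofReal_mul (by positivity), ← pow_mul,
        mul_comm m, pow_mul, hsqrt, Nat.cast_pow, ← mul_pow]
      norm_num
    rwa [← mul_assoc, Finset.card_univ, Fintype.card_fin, hrate] at hlevel

theorem exists_measurable_tendsto_levyCiesielskiSum
    (hlaw : ∀ i, HasLaw (ξ i) (gaussianReal 0 1) P) :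
    ∃ F : Ω → Cz, Measurable F ∧
      ∀ᵐ ω ∂P, Tendsto (fun N => levyCiesielskiSum N (ξ · ω)) atTop (𝓝 (F ω)) := by
  refine measurable_limit_of_tendsto_metrizable_ae (fun N => ?_) ?_
  · exact (continuous_levyCiesielskiSum N).measurable.comp_aemeasurable
      (aemeasurable_pi_lambda _ fun i => (hlaw i).aemeasurable)
  · filter_upwards [ae_summable_norm_sum_schauder hlaw] with ω hω
    exact exists_tendsto_levyCiesielskiSum hω

lemma continuous_evalAt {ι : Type*} (t : ι → Icc (0 : ℝ) 1) :
    Continuous fun (f : Cz) j => (f : C(Icc (0 : ℝ) 1, ℝ)) (t j) :=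
  continuous_pi fun j => (continuous_eval_const (t j)).comp continuous_subtype_val

theorem map_eval_eq_gauss_of_tendsto_levyCiesielskiSum [IsProbabilityMeasure P]
    (hlaw : ∀ i, HasLaw (ξ i) (gaussianReal 0 1) P) (hindep : iIndepFun ξ P) {F : Ω → Cz}
    (hF : ∀ᵐ ω ∂P, Tendsto (fun N => levyCiesielskiSum N (ξ · ω)) atTop (𝓝 (F ω)))
    {p : ℕ} {t : Fin p → Icc (0 : ℝ) 1} (hmono : StrictMono t) (hpos : ∀ j, 0 < (t j : ℝ)) :
    P.map (fun ω j => (F ω : C(Icc (0 : ℝ) 1, ℝ)) (t j)) =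
      gauss p (of fun j r => min (t j : ℝ) (t r)) := by
  refine map_eq_gauss_of_tendsto (I := schauderIndicesBelow) (v := fun i j => schauder i (t j))
    hlaw hindep (posDef_min hmono hpos) ?_ ?_
  · filter_upwards [hF] with ω hω
    refine (((continuous_evalAt t).tendsto _).comp hω).congr fun N => ?_
    ext j
    simp [levyCiesielskiSum, ContinuousMap.sum_apply]
  · refine tendsto_pi_nhds.2 fun j => tendsto_pi_nhds.2 fun r => ?_
    simpa [Matrix.sum_apply, vecMulVec_apply] using
      tendsto_sum_schauder_mul_schauder (t j) (t r)

end LevyCiesielski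

/-- existence of the Wiener measure: a Borel probability measure
`W` on `C` whose finite dimensional distributions at `0 < u_1 < … < u_p ≤ 1`
are centered Gaussian with covariance matrix `(min (u j) (u r))_{j,r}`. -/
theorem stmt16 :
    ∃ W : Measure Cz, IsProbabilityMeasure W ∧
      ∀ (p : ℕ), 1 ≤ p → ∀ u : Fin p → ℝ, StrictMono u →
        ∀ hu : ∀ j, u j ∈ Set.Ioc (0:ℝ) 1,
        W.map (fun (x : Cz) (j : Fin p) =>
            (x : C(Set.Icc (0:ℝ) 1, ℝ)) ⟨u j, Set.Ioc_subset_Icc_self (hu j)⟩) =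
          gauss p (Matrix.of fun j r => min (u j) (u r)) := by
  obtain ⟨Ω, _, P, ξ, -, hlaw, hindep, _⟩ := exists_iid SchauderIndex (gaussianReal 0 1)
  obtain ⟨F, hF, hlim⟩ := exists_measurable_tendsto_levyCiesielskiSum hlaw
  refine ⟨P.map F, Measure.isProbabilityMeasure_map hF.aemeasurable, fun p _ u hmono hu => ?_⟩
  let t : Fin p → Icc (0 : ℝ) 1 := fun j => ⟨u j, Ioc_subset_Icc_self (hu j)⟩
  have ht : StrictMono t := fun _ _ hij => hmono hij
  rw [Measure.map_map (continuous_evalAt t).measurable hF]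
  exact map_eval_eq_gauss_of_tendsto_levyCiesielskiSum hlaw hindep hlim ht fun j => (hu j).1

end
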